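/- arXiv:1407.7347 — 2 statements merged into one kernel-verified Lean document; each statement's English description precedes it below -/
import Mathlib

section
/- Let ρ̄ > 0, M > 0 and set A₀ = ρ̄² (the normalization making the background sound speed equal to 1). Let φ_a ∈ C^∞([0,∞)×ℝ²) be radially symmetric in x, vanish for |x| ≥ t + M, and satisfy the decay estimates |Λ^α ∂^β φ_a(t,x)| ≤ C_{αβ} ε σ₋(t,x)^{−|β|} σ₊(t,x)^{−1/2} for all iterated compositions Λ^α of the fields in Λ and all derivative multi-indices β. Define u_a = ∇_x φ_a and ρ_a = (A₀/(1 + 2∂_tφ_a + |∇_xφ_a|²))^{1/2}. Then, for ε > 0 sufficiently small: (1) (|Λ^α(ρ_a − ρ̄)| + |Λ^α u_a|)(t,x) ≤ C_α ε σ₋(t,x)^{−1} σ₊(t,x)^{−1/2} for all (t,x); (2) |∂Λ^α(ρ_a − ρ̄)(t,x)| + |∂Λ^α u_a(t,x)| ≤ C_α ε ⟨t⟩^{−5/2} whenever |x| ≤ lt + M with 0 ≤ l < 1; (3) for every k ∈ ℕ, 0 ≤ δ < 1 and C > 0, |X^k u_a(t,x)| ≤ C_{kδ} ε ⟨t⟩^{−5/2+δ}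 whenever |x| ≤ C⟨t⟩^{δ}; with all constants C_α, C_{kδ} independent of ε and (t,x). -/
/-!
The velocity bound in the first estimate is the hypothesis with one derivative. The density is
`ρ_a - ρ̄ = w K(w)` with `w = 2∂_tφ + |∇φ|²` and `K` smooth near `0`
(`exists_density_factor`, `rho_eq`); for small `ε` the values of `w` stay in a fixed compact
interval on `t ≥ 0` (`qq_small`). The functions all of whose `Λ`-derivatives are bounded by a
weight (`Ctl`) are stable under sums, products and composition with smooth functions, by the
Leibniz and chain rules (`Ctl.mul`, `Ctl.comp`), which gives the bound on `Λ^α(ρ_a - ρ̄)`.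

For the second estimate, the commutators `[∂_i, Λ_a]` are constant combinations of `∂`, so
`∂Λ^α f` is controlled by the `Λ`-derivatives of `∂f` (`bdd_pdi_lIter`). For `f = ∂_jφ` and
`f = ρ_a - ρ̄` these carry the weight `ε σ₋^{-2} σ₊^{-1/2}`, which is `O(ε⟨t⟩^{-5/2})` in the
cone `|x| ≤ lt + M` because `σ₋` is comparable to `⟨t⟩` there (`wt_two_le`).

For the third estimate, `φ` is even in `x`, hence `u_a` and all `X^k u_a` are odd and vanish at
`x = 0`. The region `|x| ≤ C⟨t⟩^δ` lies in a cone of slope `1/2` (`exists_cone`), so the mean value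
inequality along the segment from `0` to `x` and the second estimate produce the extra factor
`|x| ≤ C⟨t⟩^δ` (`odd_bound`).

Uniformity of the constants in `ε` and `φ_a` is obtained by working with families of functions
indexed by all admissible pairs `(ε, φ_a)`.
-/

noncomputable section

open Real MeasureTheory Set

set_option linter.unusedVariables false

/-- A function of time `t` and space `(x, y)`. -/
abbrev F3 : Type := ℝ → ℝ → ℝ → ℝ

/-- Partial derivative in time. -/
def pt (f : F3) : F3 := fun t x y => deriv (fun s => f s x y) t
/-- Partial derivative in the first space variable. -/
def px (f : F3) : F3 := fun t x y => deriv (fun s => f t s y) x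
/-- Partial derivative in the second space variable. -/
def py (f : F3) : F3 := fun t x y => deriv (fun s => f t x s) y

/-- `∂ = (∂_t, ∂_1, ∂_2)`. -/
def pdi : Fin 3 → F3 → F3 := ![pt, px, py]

/-- The scaling field `X = t∂_t + x₁∂₁ + x₂∂₂`. -/
def Xf (f : F3) : F3 := fun t x y => t * pt f t x y + x * px f t x y + y * py f t x y
/-- The rotation field `Ω = x₁∂₂ − x₂∂₁`. -/
def Om (f : F3) : F3 := fun t x y => x * py f t x y - y * px f t x y
/-- The Lorentz boost `L₁ = t∂₁ + x₁∂_t`. -/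
def L1f (f : F3) : F3 := fun t x y => t * px f t x y + x * pt f t x y
/-- The Lorentz boost `L₂ = t∂₂ + x₂∂_t`. -/
def L2f (f : F3) : F3 := fun t x y => t * py f t x y + y * pt f t x y

/-- The family `Γ = (∂_t, ∂_1, ∂_2, X)`. -/
def GammaF : Fin 4 → F3 → F3 := ![pt, px, py, Xf]

/-- Iterated composition `Γ^α` over a word `α`. -/
def GIter : List (Fin 4) → F3 → F3
  | [], f => f
  | a :: l, f => GammaF a (GIter l f)

/-- The family `Λ = (∂_t, ∂_1, ∂_2, Ω, X, L₁, L₂)`. -/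
def LamF : Fin 7 → F3 → F3 := ![pt, px, py, Om, Xf, L1f, L2f]

/-- Iterated composition `Λ^α` over a word `α`. -/
def LIter : List (Fin 7) → F3 → F3
  | [], f => f
  | a :: l, f => LamF a (LIter l f)

/-- Iterated composition `∂^β` over a word `β`. -/
def PIter : List (Fin 3) → F3 → F3
  | [], f => f
  | a :: l, f => pdi a (PIter l f)

/-- `r = |x|`. -/
def rad (x y : ℝ) : ℝ := Real.sqrt (x ^ 2 + y ^ 2)
/-- `σ₋(t,x) = 1 + |t − |x||`. -/
def sm (t x y : ℝ) : ℝ := 1 + |t - rad x y|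
/-- `σ₊(t,x) = 1 + t + |x|`. -/
def sp (t x y : ℝ) : ℝ := 1 + t + rad x y

/-- `f` is a `C^∞` function of `(t, x)`. -/
def Smooth3 (f : F3) : Prop := ContDiff ℝ (⊤ : ℕ∞) (fun p : ℝ × ℝ × ℝ => f p.1 p.2.1 p.2.2)

/-- `Z₁ = ∂₁ + (x₁/|x|)∂_t`. -/
def Z1 (f : F3) : F3 := fun t x y => px f t x y + (x / rad x y) * pt f t x y
/-- `Z₂ = ∂₂ + (x₂/|x|)∂_t`. -/
def Z2 (f : F3) : F3 := fun t x y => py f t x y + (y / rad x y) * pt f t x y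
/-- The family `Z = (Z₁, Z₂)`. -/
def Zi : Fin 2 → F3 → F3 := ![Z1, Z2]

/-- `f` is radially symmetric in the space variables. -/
def RadialF (f : F3) : Prop := ∀ t x y x' y', rad x y = rad x' y' → f t x y = f t x' y'

/-- The hypotheses on the potential `φ_a`: smooth, radially symmetric in `x`,
vanishing for `|x| ≥ t + M`, with the decay estimates
`|Λ^α ∂^β φ_a| ≤ C_{αβ} ε σ₋^{−|β|} σ₊^{−1/2}` (constants given by `Cc`). -/
def HypPhiA (M eps : ℝ) (Cc : ℕ → ℕ → ℝ) (φa : F3) : Prop :=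
  Smooth3 φa ∧ RadialF φa ∧
  (∀ t x y, 0 ≤ t → t + M ≤ rad x y → φa t x y = 0) ∧
  (∀ α : List (Fin 7), ∀ β : List (Fin 3), ∀ t x y, 0 ≤ t →
    |LIter α (PIter β φa) t x y| ≤
      Cc α.length β.length * eps * (sp t x y) ^ (-(1/2 : ℝ)) / (sm t x y) ^ β.length)

/-- The approximate density `ρ_a = (A₀/(1 + 2∂_tφ_a + |∇φ_a|²))^{1/2}` with `A₀ = ρ̄²`. -/
def rhoA (ρbar : ℝ) (φa : F3) : F3 := fun t x y =>
  Real.sqrt (ρbar ^ 2 / (1 + 2 * pt φa t x y + (px φa t x y) ^ 2 + (py φa t x y) ^ 2))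


/-! ### Coordinate derivatives and the fields as first-order operators -/

/-- `f` as a function on the product `ℝ × ℝ × ℝ`. -/
def unc (f : F3) : ℝ × ℝ × ℝ → ℝ := fun p => f p.1 p.2.1 p.2.2

/-- The standard basis of `ℝ × ℝ × ℝ`. -/
def bas : Fin 3 → ℝ × ℝ × ℝ := ![(1, 0, 0), (0, 1, 0), (0, 0, 1)]

/-- The coefficient of `∂_j` in the field `Λ_a`. -/
def co (a : Fin 7) (j : Fin 3) : F3 := fun t x y =>
  (![![1, 0, 0], ![0, 1, 0], ![0, 0, 1], ![0, -y, x], ![t, x, y], ![x, t, 0], ![y, 0, t]] a) j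

lemma LamF_eq (a : Fin 7) (f : F3) :
    LamF a f = co a 0 * pdi 0 f + co a 1 * pdi 1 f + co a 2 * pdi 2 f := by
  funext t x y
  fin_cases a <;> simp [LamF, co, pdi, Om, Xf, L1f, L2f, Pi.mul_apply, Pi.add_apply]
  all_goals ring

lemma Smooth3.iff_unc {f : F3} : Smooth3 f ↔ ContDiff ℝ (⊤ : ℕ∞) (unc f) := Iff.rfl

lemma Smooth3.differentiable {f : F3} (hf : Smooth3 f) : Differentiable ℝ (unc f) :=
  ContDiff.differentiable (Smooth3.iff_unc.1 hf) (by simp)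

lemma pdi_hasDerivAt {f : F3} (hf : Smooth3 f) (t x y : ℝ) :
    HasDerivAt (fun s => f s x y) (fderiv ℝ (unc f) (t, x, y) (bas 0)) t ∧
    HasDerivAt (fun s => f t s y) (fderiv ℝ (unc f) (t, x, y) (bas 1)) x ∧
    HasDerivAt (fun s => f t x s) (fderiv ℝ (unc f) (t, x, y) (bas 2)) y := by
  have h := (hf.differentiable (t, x, y)).hasFDerivAt
  refine ⟨?_, ?_, ?_⟩
  · exact h.comp_hasDerivAt (f := fun s => (s, x, y)) t
      ((hasDerivAt_id t).prodMk ((hasDerivAt_const t x).prodMk (hasDerivAt_const t y)))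
  · exact h.comp_hasDerivAt (f := fun s => (t, s, y)) x
      ((hasDerivAt_const x t).prodMk ((hasDerivAt_id x).prodMk (hasDerivAt_const x y)))
  · exact h.comp_hasDerivAt (f := fun s => (t, x, s)) y
      ((hasDerivAt_const y t).prodMk ((hasDerivAt_const y x).prodMk (hasDerivAt_id y)))

lemma pdi_eq {f : F3} (hf : Smooth3 f) (j : Fin 3) (t x y : ℝ) :
    pdi j f t x y = fderiv ℝ (unc f) (t, x, y) (bas j) := by
  obtain ⟨h0, h1, h2⟩ := pdi_hasDerivAt hf t x y
  fin_cases j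
  · exact h0.deriv
  · exact h1.deriv
  · exact h2.deriv

lemma unc_pdi {f : F3} (hf : Smooth3 f) (j : Fin 3) :
    unc (pdi j f) = fun p => fderiv ℝ (unc f) p (bas j) := by
  funext p
  exact pdi_eq hf j _ _ _

lemma Smooth3.pdi {f : F3} (hf : Smooth3 f) (j : Fin 3) : Smooth3 (pdi j f) := by
  rw [Smooth3.iff_unc, unc_pdi hf]
  exact ((Smooth3.iff_unc.1 hf).fderiv_right (by simp)).clm_apply contDiff_const

lemma Smooth3.add {f g : F3} (hf : Smooth3 f) (hg : Smooth3 g) : Smooth3 (f + g) :=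
  ContDiff.add hf hg

lemma Smooth3.mul {f g : F3} (hf : Smooth3 f) (hg : Smooth3 g) : Smooth3 (f * g) :=
  ContDiff.mul hf hg

lemma smooth3_const (c : ℝ) : Smooth3 (fun _ _ _ => c) := contDiff_const

lemma smooth3_co (a : Fin 7) (j : Fin 3) : Smooth3 (co a j) := by
  unfold Smooth3
  fin_cases a <;> fin_cases j <;> simp [co] <;> fun_prop

lemma Smooth3.lamF {f : F3} (hf : Smooth3 f) (a : Fin 7) : Smooth3 (LamF a f) := by
  rw [LamF_eq]
  exact (((smooth3_co a 0).mul (hf.pdi 0)).add ((smooth3_co a 1).mul (hf.pdi 1))).add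
    ((smooth3_co a 2).mul (hf.pdi 2))

lemma Smooth3.lIter {f : F3} (hf : Smooth3 f) (α : List (Fin 7)) : Smooth3 (LIter α f) := by
  induction α with
  | nil => exact hf
  | cons a l ih => exact ih.lamF a

lemma pdi_add {f g : F3} (hf : Smooth3 f) (hg : Smooth3 g) (j : Fin 3) :
    pdi j (f + g) = pdi j f + pdi j g := by
  funext t x y
  have e : unc (f + g) = unc f + unc g := rfl
  simp only [Pi.add_apply]
  rw [pdi_eq (hf.add hg), pdi_eq hf, pdi_eq hg, e,
    fderiv_add (hf.differentiable _) (hg.differentiable _)]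
  rfl

lemma pdi_mul {f g : F3} (hf : Smooth3 f) (hg : Smooth3 g) (j : Fin 3) :
    pdi j (f * g) = pdi j f * g + f * pdi j g := by
  funext t x y
  have e : unc (f * g) = unc f * unc g := rfl
  simp only [Pi.add_apply, Pi.mul_apply]
  rw [pdi_eq (hf.mul hg), pdi_eq hf, pdi_eq hg, e,
    fderiv_mul (hf.differentiable _) (hg.differentiable _)]
  simp [unc]
  ring

lemma pdi_const (c : ℝ) (j : Fin 3) : pdi j (fun _ _ _ => c) = 0 := by
  funext t x y
  fin_cases j <;> simp [pdi, pt, px, py]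

lemma pdi_comm {f : F3} (hf : Smooth3 f) (i j : Fin 3) :
    pdi i (pdi j f) = pdi j (pdi i f) := by
  funext t x y
  have hd : Differentiable ℝ (fderiv ℝ (unc f)) :=
    ((Smooth3.iff_unc.1 hf).fderiv_right (m := 1) (by norm_cast)).differentiable (by simp)
  have key : ∀ k l : Fin 3, pdi k (pdi l f) t x y =
      fderiv ℝ (fderiv ℝ (unc f)) (t, x, y) (bas k) (bas l) := by
    intro k l
    rw [pdi_eq (hf.pdi l), unc_pdi hf, fderiv_clm_apply (hd _) (by fun_prop)]
    simp
  rw [key, key]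
  exact ((Smooth3.iff_unc.1 hf).contDiffAt.isSymmSndFDerivAt (by simp; norm_cast)) _ _

lemma smooth3_comp {K : ℝ → ℝ} (hK : ContDiff ℝ (⊤ : ℕ∞) K) {w : F3} (hw : Smooth3 w) :
    Smooth3 (fun t x y => K (w t x y)) :=
  hK.comp hw

lemma pdi_comp {K : ℝ → ℝ} (hK : ContDiff ℝ (⊤ : ℕ∞) K) {w : F3} (hw : Smooth3 w) (j : Fin 3) :
    pdi j (fun t x y => K (w t x y)) = (fun t x y => deriv K (w t x y)) * pdi j w := by
  funext t x y
  have h := ((hK.differentiable (by simp) (w t x y)).hasDerivAt).comp_hasFDerivAt (t, x, y)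
    (f := unc w) (hw.differentiable (t, x, y)).hasFDerivAt
  rw [pdi_eq (smooth3_comp hK hw), Pi.mul_apply, Pi.mul_apply, Pi.mul_apply, pdi_eq hw]
  have e : unc (fun t x y => K (w t x y)) = K ∘ unc w := rfl
  rw [e, h.fderiv]
  simp

/-! ### Algebra of the fields -/

lemma LamF_add {f g : F3} (hf : Smooth3 f) (hg : Smooth3 g) (a : Fin 7) :
    LamF a (f + g) = LamF a f + LamF a g := by
  simp only [LamF_eq, pdi_add hf hg]
  ring

lemma LamF_mul {f g : F3} (hf : Smooth3 f) (hg : Smooth3 g) (a : Fin 7) :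
    LamF a (f * g) = LamF a f * g + f * LamF a g := by
  simp only [LamF_eq, pdi_mul hf hg]
  ring

lemma LamF_const (c : ℝ) (a : Fin 7) : LamF a (fun _ _ _ => c) = 0 := by
  simp only [LamF_eq, pdi_const]
  ring

lemma LamF_comp {K : ℝ → ℝ} (hK : ContDiff ℝ (⊤ : ℕ∞) K) {w : F3} (hw : Smooth3 w)
    (a : Fin 7) :
    LamF a (fun t x y => K (w t x y)) = (fun t x y => deriv K (w t x y)) * LamF a w := by
  simp only [LamF_eq, pdi_comp hK hw]
  ring

lemma LIter_append_singleton (α : List (Fin 7)) (a : Fin 7) (f : F3) :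
    LIter (α ++ [a]) f = LIter α (LamF a f) := by
  induction α with
  | nil => rfl
  | cons b l ih => simp [LIter, ih]

lemma LIter_add {f g : F3} (hf : Smooth3 f) (hg : Smooth3 g) (α : List (Fin 7)) :
    LIter α (f + g) = LIter α f + LIter α g := by
  induction α with
  | nil => rfl
  | cons b l ih => simp only [LIter, ih, LamF_add (hf.lIter l) (hg.lIter l)]

/-- The coefficients of the fields are affine, so their derivatives are constant. -/
lemma pdi_co (i : Fin 3) (a : Fin 7) (k : Fin 3) :
    pdi i (co a k) = fun _ _ _ => pdi i (co a k) 0 0 0 := by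
  funext t x y
  fin_cases i <;> fin_cases a <;> fin_cases k <;> simp [pdi, pt, px, py, co]

/-- The commutator `[∂_i, Λ_a]` is a constant-coefficient combination of `∂`. -/
lemma pdi_LamF {f : F3} (hf : Smooth3 f) (i : Fin 3) (a : Fin 7) :
    pdi i (LamF a f) = LamF a (pdi i f) +
      ((fun _ _ _ => pdi i (co a 0) 0 0 0) * pdi 0 f
        + (fun _ _ _ => pdi i (co a 1) 0 0 0) * pdi 1 f
        + (fun _ _ _ => pdi i (co a 2) 0 0 0) * pdi 2 f) := by
  have m := fun k => (smooth3_co a k).mul (hf.pdi k)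
  have e : ∀ k, pdi i (co a k * pdi k f) =
      (fun _ _ _ => pdi i (co a k) 0 0 0) * pdi k f + co a k * pdi k (pdi i f) := by
    intro k
    rw [pdi_mul (smooth3_co a k) (hf.pdi k), ← pdi_co, pdi_comm hf]
  rw [LamF_eq a f, LamF_eq a (pdi i f), pdi_add ((m 0).add (m 1)) (m 2), pdi_add (m 0) (m 1),
    e, e, e]
  ring

/-! ### Locality -/

lemma pdi_congr {U : Set (ℝ × ℝ × ℝ)} (hU : IsOpen U) {f g : F3}
    (h : ∀ p ∈ U, unc f p = unc g p) (j : Fin 3) :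
    ∀ p ∈ U, unc (pdi j f) p = unc (pdi j g) p := by
  rintro ⟨t, x, y⟩ hp
  have hn : ∀ (c : ℝ → ℝ × ℝ × ℝ) (s : ℝ), Continuous c → c s = (t, x, y) →
      (fun s => unc f (c s)) =ᶠ[nhds s] fun s => unc g (c s) := by
    intro c s hc hs
    filter_upwards [hc.continuousAt.preimage_mem_nhds (hs ▸ hU.mem_nhds hp)] with u hu
    exact h _ hu
  fin_cases j
  · exact (hn (fun s => (s, x, y)) t (by fun_prop) rfl).deriv_eq
  · exact (hn (fun s => (t, s, y)) x (by fun_prop) rfl).deriv_eq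
  · exact (hn (fun s => (t, x, s)) y (by fun_prop) rfl).deriv_eq

lemma LIter_congr {U : Set (ℝ × ℝ × ℝ)} (hU : IsOpen U) {f g : F3}
    (h : ∀ p ∈ U, unc f p = unc g p) (α : List (Fin 7)) :
    ∀ p ∈ U, unc (LIter α f) p = unc (LIter α g) p := by
  induction α with
  | nil => exact h
  | cons a l ih =>
    intro p hp
    have e := fun j => pdi_congr hU ih j p hp
    simp only [unc] at e
    simp only [unc, LIter, LamF_eq, Pi.add_apply, Pi.mul_apply, e]

/-! ### Families of functions controlled by a weight -/

/-- The family `f` is bounded on `t ≥ 0` by a constant multiple of the weight `W`; the constant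
is uniform in the index `i`. -/
def BddW {I : Type*} (W f : I → F3) : Prop :=
  ∃ C : ℝ, ∀ i t x y, 0 ≤ t → |f i t x y| ≤ C * W i t x y

/-- All `Λ`-derivatives of order at most `n` of the family `f` are bounded by multiples of `W`. -/
def Ctl {I : Type*} (n : ℕ) (W f : I → F3) : Prop :=
  ∀ α : List (Fin 7), α.length ≤ n → BddW W (fun i => LIter α (f i))

/-- The constant weight `1`. -/
def one' {I : Type*} : I → F3 := fun _ _ _ _ => 1

section Control
variable {I : Type*} {W W' f g w : I → F3} {n : ℕ}

lemma BddW.mono (hW : ∀ i t x y, 0 ≤ t → 0 ≤ W i t x y ∧ W i t x y ≤ W' i t x y)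
    (h : BddW W f) : BddW W' f := by
  obtain ⟨C, hC⟩ := h
  refine ⟨|C|, fun i t x y ht => (hC i t x y ht).trans ?_⟩
  obtain ⟨h0, h1⟩ := hW i t x y ht
  exact mul_le_mul (le_abs_self C) h1 h0 (abs_nonneg C)

lemma BddW.add (hf : BddW W f) (hg : BddW W g) : BddW W (fun i => f i + g i) := by
  obtain ⟨C, hC⟩ := hf
  obtain ⟨D, hD⟩ := hg
  refine ⟨C + D, fun i t x y ht => ?_⟩
  rw [add_mul]
  exact (abs_add_le _ _).trans (add_le_add (hC i t x y ht) (hD i t x y ht))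

lemma BddW.mul (hf : BddW W f) (hg : BddW one' g) : BddW W (fun i => f i * g i) := by
  obtain ⟨C, hC⟩ := hf
  obtain ⟨D, hD⟩ := hg
  refine ⟨C * D, fun i t x y ht => ?_⟩
  have h1 := hC i t x y ht
  have h2 := hD i t x y ht
  simp only [one', mul_one] at h2
  have := mul_le_mul h1 h2 (abs_nonneg _) ((abs_nonneg _).trans h1)
  simp only [Pi.mul_apply, abs_mul]
  linarith [mul_right_comm C (W i t x y) D]

lemma Ctl.bdd (h : Ctl n W f) : BddW W f := h [] (Nat.zero_le n)

lemma Ctl.le {m : ℕ} (hmn : m ≤ n) (h : Ctl n W f) : Ctl m W f := fun α hα => h α (hα.trans hmn)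

lemma ctl_zero : Ctl 0 W f ↔ BddW W f := by
  refine ⟨Ctl.bdd, fun h α hα => ?_⟩
  have : α = [] := List.eq_nil_of_length_eq_zero (by omega)
  subst this
  exact h

/-- Orders are peeled off from the innermost field, which is what makes induction on `n`
compatible with the Leibniz rule. -/
lemma ctl_succ : Ctl (n + 1) W f ↔ BddW W f ∧ ∀ a, Ctl n W (fun i => LamF a (f i)) := by
  constructor
  · refine fun h => ⟨h.bdd, fun a α hα => ?_⟩
    have := h (α ++ [a]) (by simpa using hα)
    simpa only [LIter_append_singleton] using this
  · rintro ⟨h0, h⟩ α hα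
    rcases List.eq_nil_or_concat' α with rfl | ⟨l, a, rfl⟩
    · exact h0
    · simp only [LIter_append_singleton]
      exact h a l (by simpa using hα)

lemma Ctl.mono (hW : ∀ i t x y, 0 ≤ t → 0 ≤ W i t x y ∧ W i t x y ≤ W' i t x y)
    (h : Ctl n W f) : Ctl n W' f := fun α hα => (h α hα).mono hW

lemma Ctl.add (sf : ∀ i, Smooth3 (f i)) (sg : ∀ i, Smooth3 (g i)) (hf : Ctl n W f)
    (hg : Ctl n W g) : Ctl n W (fun i => f i + g i) := by
  intro α hα
  have := (hf α hα).add (hg α hα)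
  simpa only [LIter_add (sf _) (sg _)] using this

lemma Ctl.mul (sf : ∀ i, Smooth3 (f i)) (sg : ∀ i, Smooth3 (g i)) (hf : Ctl n W f)
    (hg : Ctl n one' g) : Ctl n W (fun i => f i * g i) := by
  induction n generalizing f g with
  | zero => exact ctl_zero.2 (hf.bdd.mul hg.bdd)
  | succ n ih =>
    refine ctl_succ.2 ⟨hf.bdd.mul hg.bdd, fun a => ?_⟩
    simp only [LamF_mul (sf _) (sg _)]
    exact Ctl.add (fun i => ((sf i).lamF a).mul (sg i)) (fun i => (sf i).mul ((sg i).lamF a))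
      (ih (fun i => (sf i).lamF a) sg ((ctl_succ.1 hf).2 a) (hg.le n.le_succ))
      (ih sf (fun i => (sg i).lamF a) (hf.le n.le_succ) ((ctl_succ.1 hg).2 a))

lemma ctl_zero_fun : Ctl n (one' : I → F3) (fun _ => 0) := by
  induction n with
  | zero => exact ctl_zero.2 ⟨0, by simp⟩
  | succ n ih =>
    refine ctl_succ.2 ⟨⟨0, by simp⟩, fun a => ?_⟩
    have : LamF a (0 : F3) = 0 := LamF_const 0 a
    simpa only [this] using ih

lemma ctl_const (c : ℝ) : Ctl n (one' : I → F3) (fun _ _ _ _ => c) := by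
  have h0 : BddW (one' : I → F3) (fun _ _ _ _ => c) := ⟨|c|, by simp [one']⟩
  cases n with
  | zero => exact ctl_zero.2 h0
  | succ n =>
    refine ctl_succ.2 ⟨h0, fun a => ?_⟩
    simpa only [LamF_const] using ctl_zero_fun

lemma Ctl.const_mul (c : ℝ) (sf : ∀ i, Smooth3 (f i)) (hf : Ctl n W f) :
    Ctl n W (fun i => (fun _ _ _ => c) * f i) := by
  have := hf.mul sf (fun _ => smooth3_const c) (ctl_const c)
  simpa only [mul_comm] using this

/-- Composition with a smooth function of one variable: by the chain rule
`Λ_a (K ∘ w) = K'(w) Λ_a w`, and each derivative of `K` is bounded on the compact range of `w`. -/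
lemma Ctl.comp {K : ℝ → ℝ} (hK : ContDiff ℝ (⊤ : ℕ∞) K) (sw : ∀ i, Smooth3 (w i))
    (hb : ∀ i t x y, 0 ≤ t → |w i t x y| ≤ 1 / 4) (hw : Ctl n one' w) :
    Ctl n one' (fun i t x y => K (w i t x y)) := by
  induction n generalizing K with
  | zero =>
    obtain ⟨C, hC⟩ := (isCompact_Icc (a := -(1 / 4 : ℝ)) (b := 1 / 4)).exists_bound_of_continuousOn
      hK.continuous.continuousOn
    exact ctl_zero.2 ⟨C, fun i t x y ht => by simpa [one'] using hC _ (abs_le.1 (hb i t x y ht))⟩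
  | succ n ih =>
    have hw' := hw.le n.le_succ
    refine ctl_succ.2 ⟨(ih hK hw').bdd, fun a => ?_⟩
    have hK' := (contDiff_infty_iff_deriv.1 hK).2
    simp only [LamF_comp hK (sw _)]
    exact (ih hK' hw').mul (fun i => smooth3_comp hK' (sw i)) (fun i => (sw i).lamF a)
      ((ctl_succ.1 hw).2 a)

/-- Control of the `Λ`-derivatives of `∂f` controls `∂Λ^α f`, because `[∂, Λ]` lies in the span
of `∂`. -/
lemma bdd_pdi_lIter (sf : ∀ i, Smooth3 (f i)) (h : ∀ k, Ctl n W (fun i => pdi k (f i)))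
    (α : List (Fin 7)) (hα : α.length ≤ n) (j : Fin 3) :
    BddW W (fun i => pdi j (LIter α (f i))) := by
  induction n generalizing f α with
  | zero =>
    have : α = [] := List.eq_nil_of_length_eq_zero (by omega)
    subst this
    exact (h j).bdd
  | succ n ih =>
    rcases List.eq_nil_or_concat' α with rfl | ⟨l, a, rfl⟩
    · exact (h j).bdd
    · simp only [LIter_append_singleton]
      refine ih (fun i => (sf i).lamF a) (fun k => ?_) l (by simpa using hα)
      simp only [pdi_LamF (sf _)]
      have s := fun (c : ℝ) m i => (smooth3_const c).mul ((sf i).pdi m)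
      have c := fun (c : ℝ) m => Ctl.const_mul c (fun i => (sf i).pdi m) ((h m).le n.le_succ)
      exact Ctl.add (fun i => ((sf i).pdi k).lamF a)
        (fun i => ((s _ 0 i).add (s _ 1 i)).add (s _ 2 i))
        ((ctl_succ.1 (h k)).2 a)
        (Ctl.add (fun i => (s _ 0 i).add (s _ 1 i)) (s _ 2)
          (Ctl.add (s _ 0) (s _ 1) (c _ 0) (c _ 1)) (c _ 2))

end Control

/-! ### The density as a smooth function of the derivatives of the potential -/

/-- Near `w = 0` one has `(ρ̄²/(1+w))^{1/2} - ρ̄ = w K(w)` with `K = -ρ̄/(s(1+s))`,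
`s = (1+w)^{1/2}`. A cutoff in `w` makes `K` smooth on the whole line. -/
lemma exists_density_factor (ρbar : ℝ) (hρ : 0 < ρbar) :
    ∃ K : ℝ → ℝ, ContDiff ℝ (⊤ : ℕ∞) K ∧
      ∀ w : ℝ, |w| ≤ 1 / 2 → Real.sqrt (ρbar ^ 2 / (1 + w)) - ρbar = w * K w := by
  let b : ContDiffBump (0 : ℝ) := ⟨1 / 2, 3 / 4, by norm_num, by norm_num⟩
  have hη : ∀ w, 0 < 1 + w * b w := by
    intro w
    by_cases hw : |w| < 3 / 4
    · have h1 : |w * b w| ≤ |w| := by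
        rw [abs_mul, abs_of_nonneg b.nonneg]
        exact mul_le_of_le_one_right (abs_nonneg _) b.le_one
      linarith [neg_abs_le (w * b w)]
    · have : b w = 0 := by
        apply b.zero_of_le_dist
        simpa [b] using hw
      simp [this]
  have hbw : ContDiff ℝ (⊤ : ℕ∞) (fun w : ℝ => 1 + w * b w) :=
    contDiff_const.add (contDiff_id.mul b.contDiff)
  have hs : ContDiff ℝ (⊤ : ℕ∞) (fun w : ℝ => Real.sqrt (1 + w * b w)) :=
    hbw.sqrt (fun w => (hη w).ne')
  refine ⟨fun w => -ρbar / (Real.sqrt (1 + w * b w) * (1 + Real.sqrt (1 + w * b w))), ?_, ?_⟩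
  · refine contDiff_const.div (hs.mul (contDiff_const.add hs)) (fun w => ?_)
    have := Real.sqrt_pos.2 (hη w)
    positivity
  · intro w hw
    have hb : b w = 1 := b.one_of_mem_closedBall (by simpa [b] using hw)
    have hp : 0 < 1 + w := by linarith [neg_abs_le w]
    have hsp := Real.sqrt_pos.2 hp
    have hsq := Real.sq_sqrt hp.le
    simp only [hb, mul_one]
    rw [Real.sqrt_div (by positivity), Real.sqrt_sq hρ.le]
    have e : w = Real.sqrt (1 + w) ^ 2 - 1 := by linarith
    set s := Real.sqrt (1 + w)
    rw [e]
    field_simp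
    ring

/-! ### Weights -/

lemma rad_nonneg (x y : ℝ) : 0 ≤ rad x y := Real.sqrt_nonneg _

lemma one_le_sm (t x y : ℝ) : 1 ≤ sm t x y := by
  unfold sm
  linarith [abs_nonneg (t - rad x y)]

lemma one_le_sp {t : ℝ} (ht : 0 ≤ t) (x y : ℝ) : 1 ≤ sp t x y := by
  unfold sp
  linarith [rad_nonneg x y]

/-- The weight `ε σ₋^{-m} σ₊^{-1/2}`. -/
def wt (m : ℕ) (eps : ℝ) : F3 := fun t x y => eps * (sp t x y) ^ (-(1/2 : ℝ)) / (sm t x y) ^ m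

lemma wt_nonneg {eps t : ℝ} (m : ℕ) (he : 0 ≤ eps) (ht : 0 ≤ t) (x y : ℝ) :
    0 ≤ wt m eps t x y := by
  have h1 := one_le_sm t x y
  have h2 := one_le_sp ht x y
  unfold wt
  positivity

lemma wt_le {eps t : ℝ} (m : ℕ) (he : 0 ≤ eps) (ht : 0 ≤ t) (x y : ℝ) :
    wt m eps t x y ≤ eps := by
  have h1 : 1 ≤ sm t x y ^ m := one_le_pow₀ (one_le_sm t x y)
  have h2 := Real.rpow_le_one_of_one_le_of_nonpos (one_le_sp ht x y)
    (by norm_num : (-(1/2 : ℝ)) ≤ 0)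
  have h3 : eps * (sp t x y) ^ (-(1/2 : ℝ)) ≤ eps := mul_le_of_le_one_right he h2
  unfold wt
  rw [div_le_iff₀ (by linarith)]
  nlinarith

/-- Inside a cone `|x| ≤ lt + M`, `l < 1`, the weight `σ₋` is comparable to `⟨t⟩`. -/
lemma wt_two_le {l M eps t x y : ℝ} (hl : l < 1) (hM : 0 ≤ M) (he : 0 ≤ eps) (ht : 0 ≤ t)
    (hr : rad x y ≤ l * t + M) :
    wt 2 eps t x y ≤ (1 + (1 + M) / (1 - l)) ^ 2 * eps * (1 + t) ^ (-(5/2 : ℝ)) := by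
  have h1 := one_le_sm t x y
  have hl' : 0 < 1 - l := by linarith
  set D := 1 + (1 + M) / (1 - l) with hD
  have hs : (1 - l) * t + 1 - M ≤ sm t x y := by
    unfold sm
    linarith [le_abs_self (t - rad x y)]
  have hlow : 1 + t ≤ D * sm t x y := by
    have h2 : t ≤ (1 + M) / (1 - l) * sm t x y := by
      rw [div_mul_eq_mul_div, le_div_iff₀ hl']
      nlinarith
    rw [hD, add_mul]
    linarith
  have hDp : 0 < D := by positivity
  have hsp : (sp t x y) ^ (-(1/2 : ℝ)) ≤ (1 + t) ^ (-(1/2 : ℝ)) := by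
    apply Real.rpow_le_rpow_of_nonpos (by linarith) _ (by norm_num)
    unfold sp
    linarith [rad_nonneg x y]
  have e5 : (1 + t) ^ (-(5/2 : ℝ)) = (1 + t) ^ (-(1/2 : ℝ)) / (1 + t) ^ 2 := by
    rw [← Real.rpow_natCast, ← Real.rpow_sub (by linarith)]
    norm_num
  have hsq : (1 + t) ^ 2 ≤ D ^ 2 * sm t x y ^ 2 := by
    rw [← mul_pow]
    exact pow_le_pow_left₀ (by linarith) hlow 2
  have hp : 0 ≤ (1 + t) ^ (-(1/2 : ℝ)) := by positivity
  unfold wt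
  rw [e5, ← mul_div_assoc, div_le_div_iff₀ (by positivity) (by positivity)]
  calc eps * (sp t x y) ^ (-(1/2 : ℝ)) * (1 + t) ^ 2
      ≤ eps * (1 + t) ^ (-(1/2 : ℝ)) * (D ^ 2 * sm t x y ^ 2) := by gcongr
    _ = D ^ 2 * eps * (1 + t) ^ (-(1/2 : ℝ)) * sm t x y ^ 2 := by ring

/-- As `δ < 1`, the region `|x| ≤ C₀⟨t⟩^δ` lies in a cone of slope `1/2`. -/
lemma exists_cone {δ C0 : ℝ} (hδ : 0 ≤ δ) (hδ1 : δ < 1) (hC : 0 < C0) :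
    ∃ M' : ℝ, 0 ≤ M' ∧ ∀ t : ℝ, 0 ≤ t → C0 * (1 + t) ^ δ ≤ 1 / 2 * t + M' := by
  refine ⟨1 / 2 + C0 * (2 * C0) ^ (1 / (1 - δ)), by positivity, fun t ht => ?_⟩
  have hd : 0 < 1 - δ := by linarith
  have ht1 : 0 < 1 + t := by linarith
  have hT : 0 ≤ C0 * (2 * C0) ^ (1 / (1 - δ)) := by positivity
  by_cases h : 2 * C0 ≤ (1 + t) ^ (1 - δ)
  · have e : (1 + t) ^ (1 - δ) * (1 + t) ^ δ = 1 + t := by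
      rw [← Real.rpow_add ht1]
      simp
    have := mul_le_mul_of_nonneg_right h (by positivity : 0 ≤ (1 + t) ^ δ)
    linarith
  · push Not at h
    have h1 : (1 + t) ^ δ ≤ 1 + t := by
      simpa using Real.rpow_le_rpow_of_exponent_le (by linarith : 1 ≤ 1 + t) hδ1.le
    have h2 : 1 + t ≤ (2 * C0) ^ (1 / (1 - δ)) := by
      have := Real.rpow_le_rpow (by positivity) h.le (by positivity : 0 ≤ 1 / (1 - δ))
      rwa [← Real.rpow_mul ht1.le, mul_one_div_cancel hd.ne', Real.rpow_one] at this
    have := mul_le_mul_of_nonneg_left (h1.trans h2) hC.le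
    linarith

/-! ### Oddness and the mean value estimate -/

/-- `f` is odd in the space variables. -/
def OddF (f : F3) : Prop := ∀ t x y, f t (-x) (-y) = -f t x y

lemma RadialF.even {f : F3} (hf : RadialF f) (t x y : ℝ) : f t (-x) (-y) = f t x y :=
  hf _ _ _ _ _ (by simp [rad])

lemma px_odd {f : F3} (hf : RadialF f) : OddF (px f) := by
  intro t x y
  have : (fun s => f t s y) = fun s => f t (-s) (-y) := by
    funext s
    rw [hf.even]
  simp only [px]
  rw [this, deriv_comp_neg (fun s => f t s (-y))]
  simp

lemma py_odd {f : F3} (hf : RadialF f) : OddF (py f) := by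
  intro t x y
  have : (fun s => f t x s) = fun s => f t (-x) (-s) := by
    funext s
    rw [hf.even]
  simp only [py]
  rw [this, deriv_comp_neg (fun s => f t (-x) s)]
  simp

lemma OddF.xf {f : F3} (hf : OddF f) : OddF (Xf f) := by
  intro t x y
  have h0 : pt f t (-x) (-y) = -pt f t x y := by
    simp only [pt, hf _ x y]
    exact deriv.fun_neg
  have h1 : px f t (-x) (-y) = px f t x y := by
    have : (fun s => f t s y) = fun s => -f t (-s) (-y) := by
      funext s
      rw [hf, neg_neg]
    simp only [px]
    rw [this, deriv.fun_neg, deriv_comp_neg (fun s => f t s (-y))]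
    simp
  have h2 : py f t (-x) (-y) = py f t x y := by
    have : (fun s => f t x s) = fun s => -f t (-x) (-s) := by
      funext s
      rw [hf, neg_neg]
    simp only [py]
    rw [this, deriv.fun_neg, deriv_comp_neg (fun s => f t (-x) s)]
    simp
  simp only [Xf, h0, h1, h2]
  ring

lemma OddF.xf_iterate {f : F3} (hf : OddF f) (k : ℕ) : OddF (Xf^[k] f) := by
  induction k with
  | zero => exact hf
  | succ k ih =>
    rw [Function.iterate_succ_apply']
    exact ih.xf

lemma xf_iterate_eq (f : F3) (k : ℕ) : Xf^[k] f = LIter (List.replicate k 4) f := by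
  induction k with
  | zero => rfl
  | succ k ih =>
    rw [Function.iterate_succ_apply', ih]
    rfl

lemma rad_smul {s : ℝ} (hs : 0 ≤ s) (x y : ℝ) : rad (s * x) (s * y) = s * rad x y := by
  unfold rad
  rw [show (s * x) ^ 2 + (s * y) ^ 2 = s ^ 2 * (x ^ 2 + y ^ 2) by ring,
    Real.sqrt_mul (sq_nonneg s), Real.sqrt_sq hs]

/-- A smooth function odd in `x` vanishes at `x = 0`, hence is bounded by `|x|` times its spatial
gradient on the segment from `0` to `x`. -/
lemma odd_bound {f : F3} (sf : Smooth3 f) (hf : OddF f) {t x y B : ℝ} (hB : 0 ≤ B)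
    (h : ∀ j : Fin 3, ∀ u v, rad u v ≤ rad x y → |pdi j f t u v| ≤ B) :
    |f t x y| ≤ 2 * rad x y * B := by
  have h0 : f t 0 0 = 0 := by
    have := hf t 0 0
    simp only [neg_zero] at this
    linarith
  have hx : |x| ≤ rad x y := Real.abs_le_sqrt (by nlinarith [sq_nonneg y])
  have hy : |y| ≤ rad x y := Real.abs_le_sqrt (by nlinarith [sq_nonneg x])
  have hd : ∀ s : ℝ, HasDerivAt (fun s => f t (s * x) (s * y))
      (x * pdi 1 f t (s * x) (s * y) + y * pdi 2 f t (s * x) (s * y)) s := by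
    intro s
    have hF := (sf.differentiable (t, s * x, s * y)).hasFDerivAt
    have := hF.comp_hasDerivAt (f := fun s => (t, s * x, s * y)) s
      ((hasDerivAt_const s t).prodMk
        (((hasDerivAt_id s).mul_const x).prodMk ((hasDerivAt_id s).mul_const y)))
    refine this.congr_deriv ?_
    rw [pdi_eq sf, pdi_eq sf, show ((0 : ℝ), 1 * x, 1 * y) = x • bas 1 + y • bas 2 by
      simp [bas], map_add, map_smul, map_smul]
    rfl
  have key := Convex.norm_image_sub_le_of_norm_deriv_le (𝕜 := ℝ) (s := Icc (0 : ℝ) 1)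
    (f := fun s => f t (s * x) (s * y)) (C := 2 * rad x y * B) (x := 0) (y := 1)
    (fun s _ => (hd s).differentiableAt) ?_ (convex_Icc 0 1) (by simp) (by simp)
  · simpa [h0] using key
  · intro s hs
    have hrs : rad (s * x) (s * y) ≤ rad x y := by
      rw [rad_smul hs.1]
      exact mul_le_of_le_one_left (rad_nonneg x y) hs.2
    rw [(hd s).deriv, Real.norm_eq_abs]
    refine (abs_add_le _ _).trans ?_
    rw [abs_mul, abs_mul]
    have b1 := mul_le_mul hx (h 1 _ _ hrs) (abs_nonneg _) (rad_nonneg x y)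
    have b2 := mul_le_mul hy (h 2 _ _ hrs) (abs_nonneg _) (rad_nonneg x y)
    linarith

/-! ### Estimates for the potential, velocity and density -/

/-- Pairs `(ε, φ_a)` satisfying the hypotheses with `0 < ε < ε₀`. Constants uniform over this
index type are exactly constants independent of `ε` and `φ_a`. -/
def Idx (M eps0 : ℝ) (Cc : ℕ → ℕ → ℝ) : Type :=
  {p : ℝ × F3 // 0 < p.1 ∧ p.1 < eps0 ∧ HypPhiA M p.1 Cc p.2}

/-- The quantity `2∂_tφ + |∇φ|²`. -/
def qq (φ : F3) : F3 :=
  (fun _ _ _ => 2) * pdi 0 φ + pdi 1 φ * pdi 1 φ + pdi 2 φ * pdi 2 φ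

lemma smooth3_qq {φ : F3} (h : Smooth3 φ) : Smooth3 (qq φ) :=
  (((smooth3_const 2).mul (h.pdi 0)).add ((h.pdi 1).mul (h.pdi 1))).add ((h.pdi 2).mul (h.pdi 2))

lemma pdi_qq {φ : F3} (h : Smooth3 φ) (k : Fin 3) :
    pdi k (qq φ) = (fun _ _ _ => 2) * pdi k (pdi 0 φ) +
      (fun _ _ _ => 2) * (pdi k (pdi 1 φ) * pdi 1 φ) +
      (fun _ _ _ => 2) * (pdi k (pdi 2 φ) * pdi 2 φ) := by
  have h0 := (smooth3_const 2).mul (h.pdi 0)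
  have h1 := (h.pdi 1).mul (h.pdi 1)
  have h2 := (h.pdi 2).mul (h.pdi 2)
  rw [qq, pdi_add (h0.add h1) h2, pdi_add h0 h1, pdi_mul (smooth3_const 2) (h.pdi 0),
    pdi_mul (h.pdi 1) (h.pdi 1), pdi_mul (h.pdi 2) (h.pdi 2), pdi_const]
  funext t x y
  simp only [Pi.add_apply, Pi.mul_apply, Pi.zero_apply]
  ring

section Potential
variable {M eps0 : ℝ} {Cc : ℕ → ℕ → ℝ}

/-- The weight `ε σ₋^{-m} σ₊^{-1/2}` as a family over `Idx`. -/
def wI (m : ℕ) : Idx M eps0 Cc → F3 := fun i => wt m i.1.1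

lemma Idx.smooth (i : Idx M eps0 Cc) : Smooth3 i.1.2 := i.2.2.2.1

lemma ctl_PIter (n : ℕ) (β : List (Fin 3)) :
    Ctl n (wI β.length) (fun i : Idx M eps0 Cc => PIter β i.1.2) := by
  intro α _
  refine ⟨Cc α.length β.length, fun i t x y ht => ?_⟩
  have := i.2.2.2.2.2.2 α β t x y ht
  simpa only [wI, wt, mul_div_assoc, mul_assoc] using this

lemma ctl_pdi (n : ℕ) (j : Fin 3) :
    Ctl n (wI 1) (fun i : Idx M eps0 Cc => pdi j i.1.2) := ctl_PIter n [j]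

lemma ctl_pdi_pdi (n : ℕ) (j k : Fin 3) :
    Ctl n (wI 2) (fun i : Idx M eps0 Cc => pdi j (pdi k i.1.2)) := ctl_PIter n [j, k]

lemma Ctl.to_one (h0 : eps0 ≤ 1) {n m : ℕ} {f : Idx M eps0 Cc → F3} (h : Ctl n (wI m) f) :
    Ctl n one' f :=
  h.mono fun i t x y ht => ⟨wt_nonneg m i.2.1.le ht x y,
    (wt_le m i.2.1.le ht x y).trans (i.2.2.1.le.trans h0)⟩

lemma ctl_qq (h0 : eps0 ≤ 1) (n : ℕ) :
    Ctl n (wI 1) (fun i : Idx M eps0 Cc => qq i.1.2) := by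
  have s := fun (j : Fin 3) (i : Idx M eps0 Cc) => i.smooth.pdi j
  have c := fun j => ctl_pdi (M := M) (eps0 := eps0) (Cc := Cc) n j
  exact Ctl.add (fun i => ((smooth3_const 2).mul (s 0 i)).add ((s 1 i).mul (s 1 i)))
    (fun i => (s 2 i).mul (s 2 i))
    (Ctl.add (fun i => (smooth3_const 2).mul (s 0 i)) (fun i => (s 1 i).mul (s 1 i))
      ((c 0).const_mul 2 (s 0)) ((c 1).mul (s 1) (s 1) ((c 1).to_one h0)))
    ((c 2).mul (s 2) (s 2) ((c 2).to_one h0))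

lemma ctl_pdi_qq (h0 : eps0 ≤ 1) (n : ℕ) (k : Fin 3) :
    Ctl n (wI 2) (fun i : Idx M eps0 Cc => pdi k (qq i.1.2)) := by
  simp only [pdi_qq (Idx.smooth _)]
  have s := fun (j : Fin 3) (i : Idx M eps0 Cc) => i.smooth.pdi j
  have s2 := fun (j : Fin 3) (i : Idx M eps0 Cc) => (s j i).pdi k
  have s3 := fun (j : Fin 3) (i : Idx M eps0 Cc) => (s2 j i).mul (s j i)
  have c := fun j => (ctl_pdi (M := M) (eps0 := eps0) (Cc := Cc) n j).to_one h0
  have c2 := fun j => ctl_pdi_pdi (M := M) (eps0 := eps0) (Cc := Cc) n k j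
  have c3 := fun j => ((c2 j).mul (s2 j) (s j) (c j)).const_mul 2 (s3 j)
  have s4 := fun (j : Fin 3) (i : Idx M eps0 Cc) => (smooth3_const 2).mul (s3 j i)
  have s5 := fun (i : Idx M eps0 Cc) => (smooth3_const 2).mul (s2 0 i)
  exact Ctl.add (fun i => (s5 i).add (s4 1 i)) (s4 2)
    (Ctl.add s5 (s4 1) ((c2 0).const_mul 2 (s2 0)) (c3 1)) (c3 2)

/-- The smallness of `ε` keeps `2∂_tφ + |∇φ|²` away from `-1`. -/
lemma qq_small (h0 : eps0 ≤ 1 / (16 * (1 + |Cc 0 1|) ^ 2)) (i : Idx M eps0 Cc) (t x y : ℝ)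
    (ht : 0 ≤ t) : |qq i.1.2 t x y| ≤ 1 / 4 := by
  set c := |Cc 0 1| with hc
  have hc0 : 0 ≤ c := abs_nonneg _
  have hpos := i.2.1
  have he : i.1.1 * (16 * (1 + c) ^ 2) ≤ 1 := by
    rw [← le_div_iff₀ (by positivity)]
    exact i.2.2.1.le.trans h0
  have hce : c * i.1.1 ≤ 1 / 16 := by
    nlinarith [mul_nonneg hpos.le hc0, mul_nonneg hpos.le (sq_nonneg c)]
  have hd : ∀ j : Fin 3, |pdi j i.1.2 t x y| ≤ 1 / 16 := by
    intro j
    have h1 : |pdi j i.1.2 t x y| ≤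
        Cc 0 1 * i.1.1 * (sp t x y) ^ (-(1/2 : ℝ)) / (sm t x y) ^ 1 :=
      i.2.2.2.2.2.2 [] [j] t x y ht
    have h2 : |pdi j i.1.2 t x y| ≤ Cc 0 1 * wt 1 i.1.1 t x y := by
      simpa only [wt, mul_div_assoc, mul_assoc] using h1
    have h3 := mul_le_mul (le_abs_self (Cc 0 1)) (wt_le 1 hpos.le ht x y)
      (wt_nonneg 1 hpos.le ht x y) (abs_nonneg _)
    exact (h2.trans h3).trans hce
  have d0 := abs_le.1 (hd 0)
  have d1 := abs_le.1 (hd 1)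
  have d2 := abs_le.1 (hd 2)
  simp only [qq, Pi.add_apply, Pi.mul_apply]
  rw [abs_le]
  constructor <;> nlinarith

/-- The globally smooth function agreeing with `ρ_a - ρ̄` near `t ≥ 0`. -/
def gg (K : ℝ → ℝ) (φ : F3) : F3 := qq φ * fun t x y => K (qq φ t x y)

lemma smooth3_gg {K : ℝ → ℝ} (hK : ContDiff ℝ (⊤ : ℕ∞) K) {φ : F3} (h : Smooth3 φ) :
    Smooth3 (gg K φ) :=
  (smooth3_qq h).mul (smooth3_comp hK (smooth3_qq h))

lemma ctl_gg {K : ℝ → ℝ} (hK : ContDiff ℝ (⊤ : ℕ∞) K) (h1 : eps0 ≤ 1)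
    (h0 : eps0 ≤ 1 / (16 * (1 + |Cc 0 1|) ^ 2)) (n : ℕ) :
    Ctl n (wI 1) (fun i : Idx M eps0 Cc => gg K i.1.2) :=
  (ctl_qq h1 n).mul (fun i => smooth3_qq i.smooth)
    (fun i => smooth3_comp hK (smooth3_qq i.smooth))
    (Ctl.comp hK (fun i => smooth3_qq i.smooth) (qq_small h0) ((ctl_qq h1 n).to_one h1))

lemma ctl_pdi_gg {K : ℝ → ℝ} (hK : ContDiff ℝ (⊤ : ℕ∞) K) (h1 : eps0 ≤ 1)
    (h0 : eps0 ≤ 1 / (16 * (1 + |Cc 0 1|) ^ 2)) (n : ℕ) (k : Fin 3) :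
    Ctl n (wI 2) (fun i : Idx M eps0 Cc => pdi k (gg K i.1.2)) := by
  have hG : ContDiff ℝ (⊤ : ℕ∞) (fun w => w * K w) := contDiff_id.mul hK
  have hG' := (contDiff_infty_iff_deriv.1 hG).2
  have sq := fun i : Idx M eps0 Cc => smooth3_qq i.smooth
  have e : ∀ i : Idx M eps0 Cc, pdi k (gg K i.1.2) =
      pdi k (qq i.1.2) * fun t x y => deriv (fun w => w * K w) (qq i.1.2 t x y) := by
    intro i
    rw [mul_comm]
    exact pdi_comp hG (sq i) k
  simp only [e]
  exact (ctl_pdi_qq h1 n k).mul (fun i => (sq i).pdi k) (fun i => smooth3_comp hG' (sq i))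
    (Ctl.comp hG' sq (qq_small h0) ((ctl_qq h1 n).to_one h1))

/-- Since `|2∂_tφ + |∇φ|²| < 1/2` on an open set containing `{t ≥ 0}`, all iterated derivatives
of `ρ_a - ρ̄` agree there with those of the smooth function `gg K φ`. -/
lemma rho_eq {ρbar : ℝ} {K : ℝ → ℝ}
    (hKeq : ∀ w : ℝ, |w| ≤ 1 / 2 → Real.sqrt (ρbar ^ 2 / (1 + w)) - ρbar = w * K w)
    (h0 : eps0 ≤ 1 / (16 * (1 + |Cc 0 1|) ^ 2)) (i : Idx M eps0 Cc) (α : List (Fin 7))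
    (t x y : ℝ) (ht : 0 ≤ t) :
    LIter α (fun s u v => rhoA ρbar i.1.2 s u v - ρbar) t x y = LIter α (gg K i.1.2) t x y ∧
    ∀ j, pdi j (LIter α (fun s u v => rhoA ρbar i.1.2 s u v - ρbar)) t x y =
      pdi j (LIter α (gg K i.1.2)) t x y := by
  have hU : IsOpen {p : ℝ × ℝ × ℝ | |unc (qq i.1.2) p| < 1 / 2} :=
    isOpen_lt (smooth3_qq i.smooth).differentiable.continuous.abs continuous_const
  have hmem : (t, x, y) ∈ {p : ℝ × ℝ × ℝ | |unc (qq i.1.2) p| < 1 / 2} :=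
    lt_of_le_of_lt (qq_small h0 i t x y ht) (by norm_num)
  have hfg : ∀ p ∈ {p : ℝ × ℝ × ℝ | |unc (qq i.1.2) p| < 1 / 2},
      unc (fun s u v => rhoA ρbar i.1.2 s u v - ρbar) p = unc (gg K i.1.2) p := by
    intro p hp
    have h1 := hKeq (unc (qq i.1.2) p) (le_of_lt hp)
    have h2 : 1 + unc (qq i.1.2) p = 1 + 2 * pt i.1.2 p.1 p.2.1 p.2.2
        + (px i.1.2 p.1 p.2.1 p.2.2) ^ 2 + (py i.1.2 p.1 p.2.1 p.2.2) ^ 2 := by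
      simp only [unc, qq, Pi.add_apply, Pi.mul_apply, pdi, Matrix.cons_val_zero,
        Matrix.cons_val_one, Matrix.cons_val]
      ring
    rw [h2] at h1
    exact h1
  have hL := LIter_congr hU hfg α
  exact ⟨hL _ hmem, fun j => pdi_congr hU hL j _ hmem⟩

lemma bdd_pdi_lIter_pdi (α : List (Fin 7)) (j k : Fin 3) :
    BddW (wI 2) (fun i : Idx M eps0 Cc => pdi j (LIter α (pdi k i.1.2))) :=
  bdd_pdi_lIter (fun i => i.smooth.pdi k) (fun l => ctl_pdi_pdi α.length l k) α le_rfl j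

/-- The decay of `X^k ∂_mφ` near the time axis, for the two spatial derivatives `m = 1, 2`. -/
lemma xf_iterate_bound (m : Fin 3) (k : ℕ) (δ C0 : ℝ) (hδ : 0 ≤ δ) (hδ1 : δ < 1) (hC0 : 0 < C0)
    (hodd : ∀ i : Idx M eps0 Cc, OddF (pdi m i.1.2)) :
    ∃ C : ℝ, 0 ≤ C ∧ ∀ i : Idx M eps0 Cc, ∀ t x y, 0 ≤ t → rad x y ≤ C0 * (1 + t) ^ δ →
      |(Xf^[k]) (pdi m i.1.2) t x y| ≤ C * i.1.1 * (1 + t) ^ (-(5/2 : ℝ) + δ) := by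
  obtain ⟨M', hM', hcone⟩ := exists_cone hδ hδ1 hC0
  choose D hD using fun j : Fin 3 =>
    bdd_pdi_lIter_pdi (M := M) (eps0 := eps0) (Cc := Cc) (List.replicate k 4) j m
  set E : ℝ := ∑ j, |D j| with hE
  have hDE : ∀ j, D j ≤ E := fun j => (le_abs_self (D j)).trans
    (Finset.single_le_sum (f := fun j => |D j|) (fun k _ => abs_nonneg _) (Finset.mem_univ j))
  have hE0 : 0 ≤ E := Finset.sum_nonneg fun j _ => abs_nonneg _
  set F : ℝ := (1 + (1 + M') / (1 - 1 / 2)) ^ 2 with hF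
  have hF0 : 0 ≤ F := by positivity
  refine ⟨2 * C0 * (E * F), by positivity, fun i t x y ht hr => ?_⟩
  have hpos := i.2.1
  have hp5 : 0 ≤ (1 + t) ^ (-(5/2 : ℝ)) := by positivity
  have hb : ∀ j : Fin 3, ∀ u v, rad u v ≤ rad x y →
      |pdi j ((Xf^[k]) (pdi m i.1.2)) t u v| ≤ E * (F * i.1.1 * (1 + t) ^ (-(5/2 : ℝ))) := by
    intro j u v huv
    rw [xf_iterate_eq]
    refine (hD j i t u v ht).trans ?_
    exact mul_le_mul (hDE j)
      (wt_two_le (by norm_num) hM' hpos.le ht ((huv.trans hr).trans (hcone t ht)))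
      (wt_nonneg 2 hpos.le ht u v) hE0
  have hsm : Smooth3 ((Xf^[k]) (pdi m i.1.2)) := by
    rw [xf_iterate_eq]
    exact (i.smooth.pdi m).lIter _
  refine (odd_bound hsm ((hodd i).xf_iterate k) (by positivity) hb).trans ?_
  rw [Real.rpow_add (by linarith : 0 < 1 + t)]
  calc 2 * rad x y * (E * (F * i.1.1 * (1 + t) ^ (-(5/2 : ℝ))))
      ≤ 2 * (C0 * (1 + t) ^ δ) * (E * (F * i.1.1 * (1 + t) ^ (-(5/2 : ℝ)))) := by gcongr
    _ = _ := by ring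

end Potential

/-- **Decay estimates for the approximate solution** (Lemma 2.1):
`(1)` `(|Λ^α(ρ_a−ρ̄)| + |Λ^α u_a|) ≤ C_α ε σ₋^{−1}σ₊^{−1/2}`;
`(2)` `|∂Λ^α(ρ_a−ρ̄)| + |∂Λ^α u_a| ≤ C_α ε ⟨t⟩^{−5/2}` for `|x| ≤ lt+M`, `0 ≤ l < 1`;
`(3)` `|X^k u_a| ≤ C_{kδ} ε ⟨t⟩^{−5/2+δ}` for `|x| ≤ C⟨t⟩^δ`, `0 ≤ δ < 1`. -/
theorem approx_solution_decay (ρbar M : ℝ) (hρbar : 0 < ρbar) (hM : 0 < M)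
    (Cc : ℕ → ℕ → ℝ) :
    ∃ ε₀ > 0,
      (∀ α : List (Fin 7), ∃ C > 0, ∀ eps : ℝ, ∀ φa : F3,
        0 < eps → eps < ε₀ → HypPhiA M eps Cc φa →
        ∀ t x y, 0 ≤ t →
          |LIter α (fun s u v => rhoA ρbar φa s u v - ρbar) t x y|
            + max (|LIter α (px φa) t x y|) (|LIter α (py φa) t x y|) ≤
          C * eps * (sm t x y)⁻¹ * (sp t x y) ^ (-(1/2 : ℝ))) ∧
      (∀ α : List (Fin 7), ∀ l : ℝ, 0 ≤ l → l < 1 → ∃ C > 0, ∀ eps : ℝ, ∀ φa : F3,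
        0 < eps → eps < ε₀ → HypPhiA M eps Cc φa →
        ∀ i : Fin 3, ∀ t x y, 0 ≤ t → rad x y ≤ l * t + M →
          |pdi i (LIter α (fun s u v => rhoA ρbar φa s u v - ρbar)) t x y|
            + |pdi i (LIter α (px φa)) t x y| + |pdi i (LIter α (py φa)) t x y| ≤
          C * eps * (1 + t) ^ (-(5/2 : ℝ))) ∧
      (∀ k : ℕ, ∀ δ C0 : ℝ, 0 ≤ δ → δ < 1 → 0 < C0 → ∃ C > 0, ∀ eps : ℝ, ∀ φa : F3,
        0 < eps → eps < ε₀ → HypPhiA M eps Cc φa →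
        ∀ t x y, 0 ≤ t → rad x y ≤ C0 * (1 + t) ^ δ →
          max (|(Xf^[k]) (px φa) t x y|) (|(Xf^[k]) (py φa) t x y|) ≤
          C * eps * (1 + t) ^ (-(5/2 : ℝ) + δ)) := by
  set ε₀ : ℝ := 1 / (16 * (1 + |Cc 0 1|) ^ 2) with hε
  have hc0 : 0 ≤ |Cc 0 1| := abs_nonneg _
  have h1 : ε₀ ≤ 1 := by
    rw [hε, div_le_one (by positivity)]
    nlinarith [sq_nonneg |Cc 0 1|]
  obtain ⟨K, hK, hKeq⟩ := exists_density_factor ρbar hρbar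
  refine ⟨ε₀, by positivity, ?_, ?_, ?_⟩
  · intro α
    obtain ⟨C1, hC1⟩ := ctl_gg (M := M) (Cc := Cc) hK h1 le_rfl α.length α le_rfl
    obtain ⟨C2, hC2⟩ := ctl_pdi (M := M) (eps0 := ε₀) (Cc := Cc) α.length 1 α le_rfl
    obtain ⟨C3, hC3⟩ := ctl_pdi (M := M) (eps0 := ε₀) (Cc := Cc) α.length 2 α le_rfl
    refine ⟨|C1| + (|C2| + |C3|) + 1, by positivity, fun eps φa he hlt hyp t x y ht => ?_⟩
    let i : Idx M ε₀ Cc := ⟨(eps, φa), he, hlt, hyp⟩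
    have b1 := hC1 i t x y ht
    have b2 := hC2 i t x y ht
    have b3 := hC3 i t x y ht
    beta_reduce at b1
    rw [← (rho_eq hKeq le_rfl i α t x y ht).1] at b1
    have hw : 0 ≤ wt 1 eps t x y := wt_nonneg 1 he.le ht x y
    have ew : (|C1| + (|C2| + |C3|) + 1) * eps * (sm t x y)⁻¹ * (sp t x y) ^ (-(1/2 : ℝ)) =
        (|C1| + (|C2| + |C3|) + 1) * wt 1 eps t x y := by
      simp only [wt, pow_one, div_eq_mul_inv]
      ring
    rw [ew]
    have c1 := mul_le_mul_of_nonneg_right (le_abs_self C1) hw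
    have c2 := mul_le_mul_of_nonneg_right (le_abs_self C2) hw
    have c3 := mul_le_mul_of_nonneg_right (le_abs_self C3) hw
    have p2 := mul_nonneg (abs_nonneg C2) hw
    have p3 := mul_nonneg (abs_nonneg C3) hw
    have hmax : max (|LIter α (px φa) t x y|) (|LIter α (py φa) t x y|) ≤
        (|C2| + |C3|) * wt 1 eps t x y := by
      rw [add_mul]
      apply max_le
      · exact (b2.trans c2).trans (by linarith)
      · exact (b3.trans c3).trans (by linarith)
    refine (add_le_add (b1.trans c1) hmax).trans ?_
    linarith
  · intro α l hl0 hl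
    choose C1 hC1 using fun j : Fin 3 =>
      bdd_pdi_lIter (fun i : Idx M ε₀ Cc => smooth3_gg hK i.smooth)
        (fun k => ctl_pdi_gg hK h1 le_rfl α.length k) α le_rfl j
    choose C2 hC2 using fun j : Fin 3 =>
      bdd_pdi_lIter_pdi (M := M) (eps0 := ε₀) (Cc := Cc) α j 1
    choose C3 hC3 using fun j : Fin 3 =>
      bdd_pdi_lIter_pdi (M := M) (eps0 := ε₀) (Cc := Cc) α j 2
    set E : Fin 3 → ℝ := fun j => |C1 j| + |C2 j| + |C3 j| with hE
    have hE0 : ∀ j, 0 ≤ E j := fun j => by positivity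
    have hl' : 0 < 1 - l := by linarith
    refine ⟨(∑ j, E j + 1) * (1 + (1 + M) / (1 - l)) ^ 2, ?_,
      fun eps φa he hlt hyp j t x y ht hr => ?_⟩
    · have := Finset.sum_nonneg fun j (_ : j ∈ Finset.univ) => hE0 j
      positivity
    let i : Idx M ε₀ Cc := ⟨(eps, φa), he, hlt, hyp⟩
    have b1 := hC1 j i t x y ht
    have b2 := hC2 j i t x y ht
    have b3 := hC3 j i t x y ht
    beta_reduce at b1
    rw [← (rho_eq hKeq le_rfl i α t x y ht).2 j] at b1
    have hw : 0 ≤ wt 2 eps t x y := wt_nonneg 2 he.le ht x y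
    have c1 := mul_le_mul_of_nonneg_right (le_abs_self (C1 j)) hw
    have c2 := mul_le_mul_of_nonneg_right (le_abs_self (C2 j)) hw
    have c3 := mul_le_mul_of_nonneg_right (le_abs_self (C3 j)) hw
    have hs : E j ≤ ∑ j, E j + 1 := by
      linarith [Finset.single_le_sum (fun k _ => hE0 k) (Finset.mem_univ j)]
    have fin := mul_le_mul hs (wt_two_le hl hM.le he.le ht hr) hw ((hE0 j).trans hs)
    have hsum : |pdi j (LIter α (fun s u v => rhoA ρbar φa s u v - ρbar)) t x y|
        + |pdi j (LIter α (px φa)) t x y| + |pdi j (LIter α (py φa)) t x y| ≤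
        E j * wt 2 eps t x y := by
      simp only [hE, add_mul]
      exact add_le_add (add_le_add (b1.trans c1) (b2.trans c2)) (b3.trans c3)
    refine hsum.trans (fin.trans (le_of_eq ?_))
    ring
  · intro k δ C0 hδ hδ1 hC0
    obtain ⟨C1, p1, hC1⟩ := xf_iterate_bound (M := M) (eps0 := ε₀) (Cc := Cc) 1 k δ C0 hδ hδ1 hC0
      (fun i => px_odd i.2.2.2.2.1)
    obtain ⟨C2, p2, hC2⟩ := xf_iterate_bound (M := M) (eps0 := ε₀) (Cc := Cc) 2 k δ C0 hδ hδ1 hC0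
      (fun i => py_odd i.2.2.2.2.1)
    refine ⟨C1 + C2 + 1, by positivity, fun eps φa he hlt hyp t x y ht hr => ?_⟩
    let i : Idx M ε₀ Cc := ⟨(eps, φa), he, hlt, hyp⟩
    have hp : 0 ≤ (1 + t) ^ (-(5/2 : ℝ) + δ) := by positivity
    apply max_le
    · refine (hC1 i t x y ht hr).trans ?_
      show C1 * eps * (1 + t) ^ (-(5/2 : ℝ) + δ) ≤ _
      gcongr
      linarith
    · refine (hC2 i t x y ht hr).trans ?_
      show C2 * eps * (1 + t) ^ (-(5/2 : ℝ) + δ) ≤ _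
      gcongr
      linarith

end
end

section
/- There exists a constant C > 0 such that for every t ≥ 0 and every vector field v = (v₁,v₂) ∈ C₀^∞(ℝ²;ℝ²) satisfying ∇·v^⊥ = 0, where v^⊥ = (−v₂, v₁) (equivalently ∂₁v₂ − ∂₂v₁ = 0), one has ‖σ₋(t,·)∇v‖_{L²(ℝ²)} ≤ C(‖σ₋(t,·)∇·v‖_{L²(ℝ²)} + ‖v‖_{L²(ℝ²)}), where ∇v denotes the full Jacobian matrix (∂_i v_j)_{i,j=1,2} and C is independent of t and v. -/
/-!
The identity `|∇v|² = (∇·v)² - 2 det ∇v` holds for curl-free `v`, and `det ∇v` is a null form: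
`∂₁f ∂₂g - ∂₂f ∂₁g` is a divergence, so it integrates to zero if `f` has compact support
(`integral_jacobian_eq_zero`). Taking `f = w v₁` and `g = v₂` for a weight `w`, the integral of
`w det ∇v` reduces to terms `v₁ ∇w ∇v₂`, which are absorbed by Young's inequality as soon as
`|∇w|² ≤ 4w` (`pointwise_divcurl`).

The weight `σ₋²` is only Lipschitz. It is replaced by the smooth weight
`w = 1 + (t - √(1 + |x|²))²`, which satisfies `|∇w|² ≤ 4w` and, because
`0 ≤ √(1 + |x|²) - |x| ≤ 1`, also `σ₋² ≤ 5w` and `w ≤ 2σ₋²`, uniformly in `t`. This yields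
`‖σ₋∇v‖² ≤ 20 ‖σ₋∇·v‖² + 80 ‖v‖²`.
-/

noncomputable section

open Real MeasureTheory Set

set_option linter.unusedVariables false

/-- The `L²(ℝ²)` norm. -/
def L2n (g : ℝ → ℝ → ℝ) : ℝ := Real.sqrt (∫ q : ℝ × ℝ, (g q.1 q.2) ^ 2)

/-- The `L²` norm over a region `S ⊆ ℝ²`. -/
def L2nS (S : Set (ℝ × ℝ)) (g : ℝ → ℝ → ℝ) : ℝ := Real.sqrt (∫ q in S, (g q.1 q.2) ^ 2)

/-- Spatial derivative in the first variable for a function on `ℝ²`. -/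
def q1 (g : ℝ → ℝ → ℝ) : ℝ → ℝ → ℝ := fun x y => deriv (fun s => g s y) x
/-- Spatial derivative in the second variable for a function on `ℝ²`. -/
def q2 (g : ℝ → ℝ → ℝ) : ℝ → ℝ → ℝ := fun x y => deriv (fun s => g x s) y

/-! ### The regularised weight -/

/-- The smooth weight `1 + (t - ⟨x⟩)²` with `⟨x⟩ = √(1 + |x|²)`, comparable to `σ₋(t,x)²`
uniformly in `t`. -/
def smoothWeight (t : ℝ) (q : ℝ × ℝ) : ℝ := 1 + (t - √(1 + q.1 ^ 2 + q.2 ^ 2)) ^ 2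

lemma smoothWeight_pos_arg (q : ℝ × ℝ) : 0 < 1 + q.1 ^ 2 + q.2 ^ 2 := by positivity

lemma smoothWeight_contDiff (t : ℝ) : ContDiff ℝ (⊤ : ℕ∞) (smoothWeight t) := by
  have h : ContDiff ℝ (⊤ : ℕ∞) (fun q : ℝ × ℝ => √(1 + q.1 ^ 2 + q.2 ^ 2)) :=
    ContDiff.sqrt (by fun_prop) (fun q => (smoothWeight_pos_arg q).ne')
  unfold smoothWeight
  fun_prop

lemma smoothWeight_nonneg (t : ℝ) (q : ℝ × ℝ) : 0 ≤ smoothWeight t q := by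
  unfold smoothWeight; positivity

lemma smoothWeight_fderiv (t : ℝ) (q e : ℝ × ℝ) :
    fderiv ℝ (smoothWeight t) q e =
      -2 * (t - √(1 + q.1 ^ 2 + q.2 ^ 2)) * (q.1 * e.1 + q.2 * e.2) /
        √(1 + q.1 ^ 2 + q.2 ^ 2) := by
  have hk : 0 < √(1 + q.1 ^ 2 + q.2 ^ 2) := Real.sqrt_pos.2 (smoothWeight_pos_arg q)
  have h1 : HasFDerivAt (fun p : ℝ × ℝ => p.1) (ContinuousLinearMap.fst ℝ ℝ ℝ) q :=
    hasFDerivAt_fst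
  have h2 : HasFDerivAt (fun p : ℝ × ℝ => p.2) (ContinuousLinearMap.snd ℝ ℝ ℝ) q :=
    hasFDerivAt_snd
  have h3 := ((((h1.pow 2).const_add 1).add (h2.pow 2)).sqrt
    (smoothWeight_pos_arg q).ne').const_sub t
  have h4 := (h3.pow 2).const_add 1
  have h5 : HasFDerivAt (smoothWeight t) _ q := h4
  rw [h5.fderiv]
  simp
  field_simp
  ring

/-- `|∇w|² ≤ 4w` for the smooth weight `w`. -/
lemma smoothWeight_grad_sq_le (t : ℝ) (q : ℝ × ℝ) :
    (fderiv ℝ (smoothWeight t) q (1, 0)) ^ 2 + (fderiv ℝ (smoothWeight t) q (0, 1)) ^ 2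
      ≤ 4 * smoothWeight t q := by
  rw [smoothWeight_fderiv, smoothWeight_fderiv, smoothWeight]
  have hk : 0 < √(1 + q.1 ^ 2 + q.2 ^ 2) := Real.sqrt_pos.2 (smoothWeight_pos_arg q)
  have hk2 := Real.sq_sqrt (smoothWeight_pos_arg q).le
  set k := √(1 + q.1 ^ 2 + q.2 ^ 2)
  rw [div_pow, div_pow, ← add_div, div_le_iff₀ (by positivity)]
  simp only [mul_one, mul_zero, add_zero, zero_add]
  nlinarith [mul_nonneg (sq_nonneg (t - k)) (by linarith : 0 ≤ k ^ 2 - q.1 ^ 2 - q.2 ^ 2),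
    sq_nonneg k]

lemma abs_japanese_sub_rad_le (x y : ℝ) : |√(1 + x ^ 2 + y ^ 2) - rad x y| ≤ 1 := by
  unfold rad
  have h : √(x ^ 2 + y ^ 2) ≤ √(1 + x ^ 2 + y ^ 2) := Real.sqrt_le_sqrt (by linarith)
  have h' : √(1 + x ^ 2 + y ^ 2) ≤ 1 + √(x ^ 2 + y ^ 2) := by
    rw [Real.sqrt_le_left (by positivity)]
    nlinarith [Real.sq_sqrt (by positivity : 0 ≤ x ^ 2 + y ^ 2), Real.sqrt_nonneg (x ^ 2 + y ^ 2)]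
  rw [abs_le]; constructor <;> linarith

lemma sm_sq_le (t x y : ℝ) : sm t x y ^ 2 ≤ 5 * smoothWeight t (x, y) := by
  have h := abs_japanese_sub_rad_le x y
  simp only [sm, smoothWeight]
  set k := √(1 + x ^ 2 + y ^ 2)
  have h' : |t - rad x y| ≤ |t - k| + 1 := by
    have := abs_add_le (t - k) (k - rad x y)
    rw [sub_add_sub_cancel] at this; linarith
  rw [← sq_abs (t - k)]
  nlinarith [abs_nonneg (t - rad x y), abs_nonneg (t - k), sq_nonneg (2 * |t - k| - 1)]

lemma smoothWeight_le (t x y : ℝ) : smoothWeight t (x, y) ≤ 2 * sm t x y ^ 2 := by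
  have h := abs_japanese_sub_rad_le x y
  simp only [sm, smoothWeight]
  set k := √(1 + x ^ 2 + y ^ 2)
  have h' : |t - k| ≤ |t - rad x y| + 1 := by
    have := abs_sub (t - rad x y) (k - rad x y)
    rw [sub_sub_sub_cancel_right] at this; linarith
  rw [← sq_abs (t - k)]
  nlinarith [abs_nonneg (t - rad x y), abs_nonneg (t - k)]

lemma sm_continuous (t : ℝ) : Continuous (fun q : ℝ × ℝ => sm t q.1 q.2) := by
  unfold sm rad; fun_prop

/-! ### The null form `∂₁f ∂₂g - ∂₂f ∂₁g` -/

lemma contDiff_fderiv_apply {f : ℝ × ℝ → ℝ} (hf : ContDiff ℝ (⊤ : ℕ∞) f) (e : ℝ × ℝ) :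
    ContDiff ℝ (⊤ : ℕ∞) (fun q => fderiv ℝ f q e) :=
  (hf.fderiv_right (m := (⊤ : ℕ∞)) (by simp)).clm_apply contDiff_const

lemma integral_fderiv_mul_fderiv {f g : ℝ × ℝ → ℝ} (hf : ContDiff ℝ (⊤ : ℕ∞) f)
    (hg : ContDiff ℝ (⊤ : ℕ∞) g) (hfc : HasCompactSupport f) (e e' : ℝ × ℝ) :
    Integrable (fun q => fderiv ℝ f q e * fderiv ℝ g q e') ∧
    ∫ q, fderiv ℝ f q e * fderiv ℝ g q e' =
      - ∫ q, f q * fderiv ℝ (fun p => fderiv ℝ g p e') q e := by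
  have hG := contDiff_fderiv_apply hg e'
  have hF := contDiff_fderiv_apply hf e
  have hGe := contDiff_fderiv_apply hG e
  have i1 : Integrable (fun q => fderiv ℝ f q e * fderiv ℝ g q e') :=
    (hF.continuous.mul hG.continuous).integrable_of_hasCompactSupport
      ((hfc.fderiv_apply (𝕜 := ℝ) e).mul_right)
  refine ⟨i1, ?_⟩
  rw [integral_mul_fderiv_eq_neg_fderiv_mul_of_integrable i1, neg_neg]
  · exact (hf.continuous.mul hGe.continuous).integrable_of_hasCompactSupport hfc.mul_right
  · exact (hf.continuous.mul hG.continuous).integrable_of_hasCompactSupport hfc.mul_right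
  · exact fun x _ => (hf.differentiable (by simp)) x
  · exact fun x _ => (hG.differentiable (by simp)) x

/-- The Jacobian determinant of `(f, g)` is a divergence, hence integrates to zero when `f` has
compact support. -/
lemma integral_jacobian_eq_zero {f g : ℝ × ℝ → ℝ} (hf : ContDiff ℝ (⊤ : ℕ∞) f)
    (hg : ContDiff ℝ (⊤ : ℕ∞) g) (hfc : HasCompactSupport f) (e e' : ℝ × ℝ) :
    Integrable (fun q => fderiv ℝ f q e * fderiv ℝ g q e' - fderiv ℝ f q e' * fderiv ℝ g q e) ∧
    ∫ q, (fderiv ℝ f q e * fderiv ℝ g q e' - fderiv ℝ f q e' * fderiv ℝ g q e) = 0 := by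
  obtain ⟨i1, h1⟩ := integral_fderiv_mul_fderiv hf hg hfc e e'
  obtain ⟨i2, h2⟩ := integral_fderiv_mul_fderiv hf hg hfc e' e
  refine ⟨i1.sub i2, ?_⟩
  rw [integral_sub i1 i2, h1, h2]
  have hd : Differentiable ℝ (fderiv ℝ g) :=
    (hg.fderiv_right (m := (⊤ : ℕ∞)) (by simp)).differentiable (by simp)
  have key : ∀ q, fderiv ℝ (fun p => fderiv ℝ g p e') q e
      = fderiv ℝ (fun p => fderiv ℝ g p e) q e' := by
    intro q
    have hs : IsSymmSndFDerivAt ℝ g q :=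
      hg.contDiffAt.isSymmSndFDerivAt (by simpa using WithTop.coe_le_coe.2 (le_top : (2 : ℕ∞) ≤ ⊤))
    have hc : ∀ u w : ℝ × ℝ, fderiv ℝ (fun p => fderiv ℝ g p u) q w
        = fderiv ℝ (fderiv ℝ g) q w u := by
      intro u w
      rw [fderiv_clm_apply (hd q) (differentiableAt_const u)]
      simp
    rw [hc, hc, hs.eq]
  simp only [key, sub_self]

/-! ### The estimate -/

/-- The algebraic core: `a, b, c, d` stand for `∂₁v₁, ∂₂v₁, ∂₁v₂, ∂₂v₂`, `u` for `v₁`, `w` for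
the weight and `(p, r)` for its gradient. The last bracket is the Jacobian determinant of
`(w v₁, v₂)`. -/
lemma pointwise_divcurl {a b c d u w p r : ℝ} (hbc : c = b) (hw : 0 ≤ w)
    (hpr : p ^ 2 + r ^ 2 ≤ 4 * w) :
    w * (a ^ 2 + b ^ 2 + c ^ 2 + d ^ 2) ≤
      2 * (w * (a + d) ^ 2) + 16 * u ^ 2 - 4 * ((w * a + u * p) * d - (w * b + u * r) * c) := by
  subst hbc
  set g := a ^ 2 + c ^ 2 + c ^ 2 + d ^ 2 with hg
  have hX : (p * d - r * c) ^ 2 ≤ 4 * (w * g) := by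
    have h1 : (p * d - r * c) ^ 2 ≤ (p ^ 2 + r ^ 2) * (c ^ 2 + d ^ 2) := by
      nlinarith [sq_nonneg (p * c + r * d)]
    have h2 : (p ^ 2 + r ^ 2) * (c ^ 2 + d ^ 2) ≤ (4 * w) * g :=
      mul_le_mul hpr (by nlinarith [sq_nonneg a, sq_nonneg c]) (by positivity) (by positivity)
    linarith
  have hY : 4 * (u * (p * d - r * c)) ≤ w * g + 16 * u ^ 2 := by
    nlinarith [sq_nonneg ((p * d - r * c) - 8 * u)]
  have : w * g = w * (a + d) ^ 2 - 2 * (w * (a * d - c * c)) := by rw [hg]; ring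
  nlinarith

/-- **Weighted div-curl estimate** (Lemma 2.3 (1)):  if `v ∈ C₀^∞(ℝ²;ℝ²)` is curl-free
(`∇·v^⊥ = 0`), then `‖σ₋∇v‖ ≤ C(‖σ₋∇·v‖ + ‖v‖)` with `C` independent of `t` and `v`. -/
theorem weighted_divcurl_estimate :
    ∃ C > 0, ∀ t : ℝ, 0 ≤ t → ∀ v1 v2 : ℝ → ℝ → ℝ,
      ContDiff ℝ (⊤ : ℕ∞) (fun q : ℝ × ℝ => v1 q.1 q.2) →
      ContDiff ℝ (⊤ : ℕ∞) (fun q : ℝ × ℝ => v2 q.1 q.2) →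
      HasCompactSupport (fun q : ℝ × ℝ => v1 q.1 q.2) →
      HasCompactSupport (fun q : ℝ × ℝ => v2 q.1 q.2) →
      (∀ x y, q1 v2 x y - q2 v1 x y = 0) →
      L2n (fun x y => sm t x y *
          Real.sqrt ((q1 v1 x y) ^ 2 + (q2 v1 x y) ^ 2 + (q1 v2 x y) ^ 2 + (q2 v2 x y) ^ 2))
        ≤ C * (L2n (fun x y => sm t x y * (q1 v1 x y + q2 v2 x y))
          + L2n (fun x y => Real.sqrt ((v1 x y) ^ 2 + (v2 x y) ^ 2))) := by
  refine ⟨9, by norm_num, ?_⟩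
  intro t _ v1 v2 h1 h2 hc1 hc2 hcurl
  set V1 : ℝ × ℝ → ℝ := fun q => v1 q.1 q.2 with hV1
  set V2 : ℝ × ℝ → ℝ := fun q => v2 q.1 q.2 with hV2
  have e1 : ∀ v : ℝ → ℝ → ℝ, ContDiff ℝ (⊤ : ℕ∞) (fun q : ℝ × ℝ => v q.1 q.2) →
      ∀ x y, q1 v x y = fderiv ℝ (fun q : ℝ × ℝ => v q.1 q.2) (x, y) (1, 0) := by
    intro v hv x y
    have hd := (hv.differentiable (by simp) (x, y)).hasFDerivAt
    exact (hd.comp_hasDerivAt (f := fun s : ℝ => (s, y)) x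
      ((hasDerivAt_id x).prodMk (hasDerivAt_const x y))).deriv
  have e2 : ∀ v : ℝ → ℝ → ℝ, ContDiff ℝ (⊤ : ℕ∞) (fun q : ℝ × ℝ => v q.1 q.2) →
      ∀ x y, q2 v x y = fderiv ℝ (fun q : ℝ × ℝ => v q.1 q.2) (x, y) (0, 1) := by
    intro v hv x y
    have hd := (hv.differentiable (by simp) (x, y)).hasFDerivAt
    exact (hd.comp_hasDerivAt (f := fun s : ℝ => (x, s)) y
      ((hasDerivAt_const y x).prodMk (hasDerivAt_id y))).deriv
  simp only [e1 v1 h1, e1 v2 h2, e2 v1 h1, e2 v2 h2] at hcurl ⊢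
  set W := smoothWeight t with hW
  have hWs : ContDiff ℝ (⊤ : ℕ∞) W := smoothWeight_contDiff t
  obtain ⟨iJ, hJ⟩ := integral_jacobian_eq_zero (f := fun q => W q * V1 q) (g := V2)
    (hWs.mul h1) h2 hc1.mul_left (1, 0) (0, 1)
  have hprod : ∀ q e : ℝ × ℝ, fderiv ℝ (fun q => W q * V1 q) q e
      = W q * fderiv ℝ V1 q e + V1 q * fderiv ℝ W q e := by
    intro q e
    rw [fderiv_fun_mul (hWs.differentiable (by simp) q) (h1.differentiable (by simp) q)]
    simp
  have hsm := sm_continuous t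
  have ca := (contDiff_fderiv_apply h1 (1, 0)).continuous
  have cb := (contDiff_fderiv_apply h1 (0, 1)).continuous
  have cc := (contDiff_fderiv_apply h2 (1, 0)).continuous
  have cd := (contDiff_fderiv_apply h2 (0, 1)).continuous
  have ka := hc1.fderiv_apply (𝕜 := ℝ) (1, 0)
  have kb := hc1.fderiv_apply (𝕜 := ℝ) (0, 1)
  have kc := hc2.fderiv_apply (𝕜 := ℝ) (1, 0)
  have kd := hc2.fderiv_apply (𝕜 := ℝ) (0, 1)
  have ksq : ∀ f : ℝ × ℝ → ℝ, HasCompactSupport f → HasCompactSupport (fun q => f q ^ 2) :=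
    fun f hf => hf.comp_left (g := fun s : ℝ => s ^ 2) (by simp)
  have iN : Integrable (fun q : ℝ × ℝ => sm t q.1 q.2 ^ 2 *
      (fderiv ℝ V1 q (1, 0) ^ 2 + fderiv ℝ V1 q (0, 1) ^ 2 + fderiv ℝ V2 q (1, 0) ^ 2
        + fderiv ℝ V2 q (0, 1) ^ 2)) :=
    Continuous.integrable_of_hasCompactSupport (by fun_prop)
      ((((ksq _ ka).add (ksq _ kb)).add (ksq _ kc)).add (ksq _ kd)).mul_left
  have iD : Integrable (fun q : ℝ × ℝ => sm t q.1 q.2 ^ 2 *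
      (fderiv ℝ V1 q (1, 0) + fderiv ℝ V2 q (0, 1)) ^ 2) :=
    Continuous.integrable_of_hasCompactSupport (by fun_prop) (ksq _ (ka.add kd)).mul_left
  have iV : Integrable (fun q : ℝ × ℝ => V1 q ^ 2 + V2 q ^ 2) :=
    Continuous.integrable_of_hasCompactSupport
      ((h1.continuous.pow 2).add (h2.continuous.pow 2)) ((ksq _ hc1).add (ksq _ hc2))
  have hpt : ∀ q : ℝ × ℝ, sm t q.1 q.2 ^ 2 *
      (fderiv ℝ V1 q (1, 0) ^ 2 + fderiv ℝ V1 q (0, 1) ^ 2 + fderiv ℝ V2 q (1, 0) ^ 2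
        + fderiv ℝ V2 q (0, 1) ^ 2) ≤
      20 * (sm t q.1 q.2 ^ 2 * (fderiv ℝ V1 q (1, 0) + fderiv ℝ V2 q (0, 1)) ^ 2)
        + 80 * (V1 q ^ 2 + V2 q ^ 2)
        - 20 * (fderiv ℝ (fun q => W q * V1 q) q (1, 0) * fderiv ℝ V2 q (0, 1)
          - fderiv ℝ (fun q => W q * V1 q) q (0, 1) * fderiv ℝ V2 q (1, 0)) := by
    intro q
    rw [hprod, hprod]
    have hcore := pointwise_divcurl (a := fderiv ℝ V1 q (1, 0)) (d := fderiv ℝ V2 q (0, 1))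
      (u := V1 q) (sub_eq_zero.1 (hcurl q.1 q.2)) (smoothWeight_nonneg t q)
      (smoothWeight_grad_sq_le t q)
    have hl := mul_le_mul_of_nonneg_right (sm_sq_le t q.1 q.2)
      (by positivity : 0 ≤ fderiv ℝ V1 q (1, 0) ^ 2 + fderiv ℝ V1 q (0, 1) ^ 2
        + fderiv ℝ V2 q (1, 0) ^ 2 + fderiv ℝ V2 q (0, 1) ^ 2)
    have hr := mul_le_mul_of_nonneg_right (smoothWeight_le t q.1 q.2)
      (sq_nonneg (fderiv ℝ V1 q (1, 0) + fderiv ℝ V2 q (0, 1)))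
    simp only [Prod.mk.eta] at hcore hl hr
    rw [← hW] at hcore hl hr
    linarith [sq_nonneg (V2 q)]
  have hint := integral_mono iN (((iD.const_mul 20).add (iV.const_mul 80)).sub (iJ.const_mul 20))
    hpt
  rw [integral_sub' ((iD.const_mul 20).add (iV.const_mul 80)) (iJ.const_mul 20),
    integral_add' (iD.const_mul 20) (iV.const_mul 80), integral_const_mul, integral_const_mul,
    integral_const_mul, hJ] at hint
  unfold L2n
  have sq1 : ∀ q : ℝ × ℝ, √(fderiv ℝ V1 q (1, 0) ^ 2 + fderiv ℝ V1 q (0, 1) ^ 2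
      + fderiv ℝ V2 q (1, 0) ^ 2 + fderiv ℝ V2 q (0, 1) ^ 2) ^ 2 =
      fderiv ℝ V1 q (1, 0) ^ 2 + fderiv ℝ V1 q (0, 1) ^ 2
      + fderiv ℝ V2 q (1, 0) ^ 2 + fderiv ℝ V2 q (0, 1) ^ 2 :=
    fun q => Real.sq_sqrt (by positivity)
  have sq2 : ∀ q : ℝ × ℝ, √(v1 q.1 q.2 ^ 2 + v2 q.1 q.2 ^ 2) ^ 2 = V1 q ^ 2 + V2 q ^ 2 :=
    fun q => Real.sq_sqrt (by positivity)
  simp only [mul_pow, Prod.mk.eta, sq2]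
  rw [← hV1, ← hV2]
  simp only [sq1]
  set N := ∫ q : ℝ × ℝ, sm t q.1 q.2 ^ 2 *
      (fderiv ℝ V1 q (1, 0) ^ 2 + fderiv ℝ V1 q (0, 1) ^ 2 + fderiv ℝ V2 q (1, 0) ^ 2
        + fderiv ℝ V2 q (0, 1) ^ 2)
  set D := ∫ q : ℝ × ℝ, sm t q.1 q.2 ^ 2 *
      (fderiv ℝ V1 q (1, 0) + fderiv ℝ V2 q (0, 1)) ^ 2
  set E := ∫ q : ℝ × ℝ, (V1 q ^ 2 + V2 q ^ 2)
  have hD : 0 ≤ D := integral_nonneg fun q => by positivity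
  have hE : 0 ≤ E := integral_nonneg fun q => by positivity
  rw [Real.sqrt_le_left (by positivity)]
  nlinarith [Real.sq_sqrt hD, Real.sq_sqrt hE, mul_nonneg (Real.sqrt_nonneg D) (Real.sqrt_nonneg E)]

end
end
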